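/- Let p be a prime, q = p^m, and let k, r be integers with 0 < k < r and r ≥ 3. Let a_0, a_1, …, a_k ∈ F_{q^r} with a_k ≠ 0. Then the polynomial V_{k,r}(X_1,…,X_r) = −∏_{i=1}^r X_i + Σ_{u=1}^{k} Σ_{i=1}^{r} a_u^{q^{i-1}} X_i^u + T(a_0) is irreducible in F̄_q[X_1,…,X_r]; that is, the variety V_{k,r} is absolutely irreducible. -/

import Mathlib

open MvPolynomial

/-!
Give every variable a weight. The top weighted homogeneous part is multiplicative over a domain,
so a polynomial is irreducible as soon as its top part is, provided the weights are nonnegative.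

Suppose `2 ≤ k < r`. Giving two of the variables, `X s` and `X t`, the weight `r - 2` and the
others the weight `k - 2` puts `∏ i, X i`, `X s ^ k` and `X t ^ k` in weight `k * (r - 2)` and
everything else in `V_{k,r}` strictly below. The top part `α * X s ^ k + β * X t ^ k - ∏ i, X i`
has degree one in any third variable `X j`, and its two coefficients with respect to `X j` have no
common factor, so it is irreducible. For `k = 1` the weight `k - 2` is negative, but then `V_{1,r}`
itself has degree one in each variable.
-/

section WeightedLeadingForm

variable {σ R M : Type*} [AddCommMonoid M] [LinearOrder M]

theorem mem_restrictSupport_of_isWeightedHomogeneous [CommSemiring R] {w : σ → M}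
    {F : MvPolynomial σ R} {n N : M} (hF : IsWeightedHomogeneous w F n) (hnN : n ≤ N) :
    F ∈ restrictSupport R {d | Finsupp.weight w d ≤ N} := by
  rw [mem_restrictSupport_iff]
  exact fun d hd ↦ (hF (mem_support_iff.1 hd)).trans_le hnN

variable [OrderBot M]

section CommSemiring

variable [CommSemiring R] {w : σ → M} {F G : MvPolynomial σ R} {m n N : M}

/-- The top weighted homogeneous component of a polynomial, where the variable `X i` has
weight `w i`; it is `0` for the zero polynomial. -/
noncomputable def weightedLeadingForm (w : σ → M) (F : MvPolynomial σ R) : MvPolynomial σ R :=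
  weightedHomogeneousComponent w (weightedTotalDegree w F) F

theorem weightedTotalDegree_le_iff_mem_restrictSupport :
    weightedTotalDegree w F ≤ N ↔ F ∈ restrictSupport R {d | Finsupp.weight w d ≤ N} := by
  simp [weightedTotalDegree, mem_restrictSupport_iff, Set.subset_def]

theorem weightedLeadingForm_ne_zero (hF : F ≠ 0) : weightedLeadingForm w F ≠ 0 := by
  classical
  obtain ⟨d, hd, htop⟩ :=
    F.support.exists_mem_eq_sup (support_nonempty.2 hF) (fun d ↦ Finsupp.weight w d)
  refine ne_zero_iff.2 ⟨d, ?_⟩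
  rw [weightedLeadingForm, coeff_weightedHomogeneousComponent, weightedTotalDegree,
    if_pos htop.symm]
  exact mem_support_iff.1 hd

theorem weightedLeadingForm_eq_weightedHomogeneousComponent
    (hle : weightedTotalDegree w F ≤ N) (hne : weightedHomogeneousComponent w N F ≠ 0) :
    weightedLeadingForm w F = weightedHomogeneousComponent w N F := by
  rcases hle.lt_or_eq with hlt | rfl
  · exact absurd (weightedHomogeneousComponent_eq_zero N F hlt) hne
  · rfl

theorem weightedTotalDegree_mul_le [IsOrderedAddMonoid M] :
    weightedTotalDegree w (F * G) ≤ weightedTotalDegree w F + weightedTotalDegree w G := by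
  classical
  refine Finset.sup_le fun d hd ↦ ?_
  obtain ⟨x, hx, y, hy, rfl⟩ := Finset.mem_add.1 (support_mul F G hd)
  rw [map_add]
  exact add_le_add (le_weightedTotalDegree w hx) (le_weightedTotalDegree w hy)

theorem weightedHomogeneousComponent_add_mul [IsOrderedCancelAddMonoid M]
    (hF : weightedTotalDegree w F ≤ m) (hG : weightedTotalDegree w G ≤ n) :
    weightedHomogeneousComponent w (m + n) (F * G) =
      weightedHomogeneousComponent w m F * weightedHomogeneousComponent w n G := by
  classical
  ext d
  simp only [coeff_weightedHomogeneousComponent, coeff_mul, ite_zero_mul_ite_zero]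
  rw [← Finset.sum_const_zero (s := Finset.HasAntidiagonal.antidiagonal d),
    ← Finset.sum_ite_irrel]
  refine Finset.sum_congr rfl fun ⟨x, y⟩ hxy ↦ ?_
  obtain rfl : x + y = d := Finset.HasAntidiagonal.mem_antidiagonal.1 hxy
  by_cases hx : coeff x F = 0
  · simp [hx]
  by_cases hy : coeff y G = 0
  · simp [hy]
  have hxm : Finsupp.weight w x ≤ m := (le_weightedTotalDegree w (mem_support_iff.2 hx)).trans hF
  have hyn : Finsupp.weight w y ≤ n := (le_weightedTotalDegree w (mem_support_iff.2 hy)).trans hG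
  rw [map_add]
  simp only [add_eq_add_iff_eq_and_eq hxm hyn, Finset.sum_const_zero]

theorem weightedLeadingForm_eq_self (hF : IsWeightedHomogeneous w F n) :
    weightedLeadingForm w F = F := by
  rcases eq_or_ne F 0 with rfl | hF0
  · exact map_zero _
  have hcomp : weightedHomogeneousComponent w n F = F := weightedHomogeneousComponent_eq_self hF
  have hle : weightedTotalDegree w F ≤ n := weightedTotalDegree_le_iff_mem_restrictSupport.2
    (mem_restrictSupport_of_isWeightedHomogeneous hF le_rfl)
  rw [weightedLeadingForm_eq_weightedHomogeneousComponent hle (hcomp.symm ▸ hF0), hcomp]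

end CommSemiring

section IsDomain

variable [CommRing R] [IsDomain R] {w : σ → M} {F : MvPolynomial σ R}

theorem weightedLeadingForm_mul [IsOrderedCancelAddMonoid M] (w : σ → M) (F G : MvPolynomial σ R) :
    weightedLeadingForm w (F * G) = weightedLeadingForm w F * weightedLeadingForm w G := by
  rcases eq_or_ne F 0 with rfl | hF
  · simp [weightedLeadingForm]
  rcases eq_or_ne G 0 with rfl | hG
  · simp [weightedLeadingForm]
  have hmul := weightedHomogeneousComponent_add_mul (le_refl (weightedTotalDegree w F))
    (le_refl (weightedTotalDegree w G))
  rw [weightedLeadingForm_eq_weightedHomogeneousComponent weightedTotalDegree_mul_le]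
  · exact hmul
  · exact hmul ▸ mul_ne_zero (weightedLeadingForm_ne_zero hF) (weightedLeadingForm_ne_zero hG)

theorem isUnit_weightedLeadingForm_iff [CanonicallyOrderedAdd M] :
    IsUnit (weightedLeadingForm w F) ↔ IsUnit F := by
  have homogeneous_of_isUnit {P : MvPolynomial σ R} (hP : IsUnit P) :
      IsWeightedHomogeneous w P 0 := by
    obtain ⟨c, -, rfl⟩ := isUnit_iff_eq_C_of_isReduced.1 hP
    exact isWeightedHomogeneous_C w c
  suffices IsUnit (weightedLeadingForm w F) ∨ IsUnit F → weightedLeadingForm w F = F by grind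
  rintro (hlead | hF)
  · have hdeg : weightedTotalDegree w F = 0 := IsWeightedHomogeneous.inj_right hlead.ne_zero
      (weightedHomogeneousComponent_isWeightedHomogeneous _ F) (homogeneous_of_isUnit hlead)
    exact weightedLeadingForm_eq_self
      (isWeightedHomogeneous_of_total_degree_zero w (hdeg.trans bot_eq_zero.symm))
  · exact weightedLeadingForm_eq_self (homogeneous_of_isUnit hF)

theorem irreducible_of_irreducible_weightedLeadingForm [CanonicallyOrderedAdd M]
    [IsOrderedCancelAddMonoid M]
    (h : Irreducible (weightedLeadingForm w F)) : Irreducible F where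
  not_isUnit := mt isUnit_weightedLeadingForm_iff.2 h.not_isUnit
  isUnit_or_isUnit G H hGH := by
    rw [hGH, weightedLeadingForm_mul] at h
    simpa only [isUnit_weightedLeadingForm_iff] using h.isUnit_or_isUnit rfl

end IsDomain

end WeightedLeadingForm

section MulXAdd

theorem isRelPrime_prod_left_of_prime {ι M : Type*} [CommMonoidWithZero M] [IsCancelMulZero M]
    {s : Finset ι} {f : ι → M} {a : M} (hf : ∀ i ∈ s, Prime (f i)) (ha : ∀ i ∈ s, ¬ f i ∣ a) :
    IsRelPrime (∏ i ∈ s, f i) a := by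
  induction s using Finset.cons_induction with
  | empty => exact isRelPrime_one_left
  | cons i s hi ih =>
    rw [Finset.forall_mem_cons] at hf ha
    intro d hd hda
    rw [Finset.prod_cons] at hd
    rcases hf.1.left_dvd_or_dvd_right_of_dvd_mul hd with hid | hds
    · exact absurd (hid.trans hda) ha.1
    · exact ih hf.2 ha.2 hds hda

variable {σ R : Type*}

section CommSemiring

variable [CommSemiring R]

theorem notMem_vars_iff_mem_supported_compl {i : σ} {P : MvPolynomial σ R} :
    i ∉ P.vars ↔ P ∈ supported R {i}ᶜ := by
  simp [mem_supported]

theorem not_X_dvd_C {c : R} (hc : c ≠ 0) (i : σ) : ¬ X i ∣ (C c : MvPolynomial σ R) := by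
  rintro ⟨Q, hQ⟩
  simpa [hc] using congrArg constantCoeff hQ

theorem notMem_vars_prod_X [Nontrivial R] {i : σ} {s : Finset σ} (hi : i ∉ s) :
    i ∉ (∏ j ∈ s, X j : MvPolynomial σ R).vars := by
  rw [notMem_vars_iff_mem_supported_compl]
  exact prod_mem fun j hj ↦ X_mem_supported.2 (ne_of_mem_of_not_mem hj hi)

theorem totalDegree_prod_X [IsDomain R] (s : Finset σ) :
    (∏ j ∈ s, X j : MvPolynomial σ R).totalDegree = s.card := by
  have hhom : (∏ j ∈ s, X j : MvPolynomial σ R).IsHomogeneous (∑ _j ∈ s, 1) :=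
    IsHomogeneous.prod s _ _ fun j _ ↦ isHomogeneous_X R j
  rw [hhom.totalDegree (Finset.prod_ne_zero_iff.2 fun j _ ↦ X_ne_zero j), Finset.card_eq_sum_ones]

theorem totalDegree_prod_X_add_C [IsDomain R] {s : Finset σ} (hs : s.Nonempty) (c : R) :
    ((∏ j ∈ s, X j) + C c : MvPolynomial σ R).totalDegree = s.card := by
  rw [totalDegree_add_eq_left_of_totalDegree_lt, totalDegree_prod_X]
  rwa [totalDegree_C, totalDegree_prod_X, Finset.card_pos]

end CommSemiring

variable [CommRing R] [IsDomain R]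

theorem irreducible_prod_X_mul_X_add {s : Finset σ} {i : σ} {P : MvPolynomial σ R} (hi : i ∉ s)
    (hP : i ∉ P.vars) (hdvd : ∀ j ∈ s, ¬ X j ∣ P) : Irreducible ((∏ j ∈ s, X j) * X i + P) := by
  refine irreducible_mul_X_add _ P i (Finset.prod_ne_zero_iff.2 fun j _ ↦ X_ne_zero j)
    (notMem_vars_prod_X hi) hP ?_
  exact isRelPrime_prod_left_of_prime (fun _ _ ↦ X_prime) hdvd

theorem irreducible_prod_X_add_C {s : Finset σ} (hs : s.Nonempty) {c : R} (hc : c ≠ 0) :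
    Irreducible ((∏ j ∈ s, X j) + C c : MvPolynomial σ R) := by
  classical
  obtain ⟨i, hi⟩ := hs
  rw [← Finset.prod_erase_mul s _ hi]
  exact irreducible_prod_X_mul_X_add (Finset.notMem_erase i s) (by simp)
    fun j _ ↦ not_X_dvd_C hc j

theorem irreducible_prod_X_add_C_mul_X_add {s : Finset σ} {i : σ} {P : MvPolynomial σ R} {c : R}
    (hi : i ∉ s) (hc : c ≠ 0) (hP0 : P ≠ 0) (hP : i ∉ P.vars) (hdeg : P.totalDegree < s.card) :
    Irreducible (((∏ j ∈ s, X j) + C c) * X i + P) := by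
  have hs : s.Nonempty := Finset.card_pos.1 (Nat.zero_lt_of_lt hdeg)
  have hirr : Irreducible ((∏ j ∈ s, X j) + C c : MvPolynomial σ R) :=
    irreducible_prod_X_add_C hs hc
  have hvars : i ∉ ((∏ j ∈ s, X j) + C c : MvPolynomial σ R).vars := by
    rw [notMem_vars_iff_mem_supported_compl]
    exact add_mem (notMem_vars_iff_mem_supported_compl.1 (notMem_vars_prod_X hi))
      (Subalgebra.algebraMap_mem _ c)
  refine irreducible_mul_X_add _ P i hirr.ne_zero hvars hP (hirr.isRelPrime_iff_not_dvd.2 ?_)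
  intro hdvd
  have := totalDegree_le_of_dvd_of_isDomain hdvd hP0
  rw [totalDegree_prod_X_add_C hs] at this
  omega

theorem irreducible_prod_X_add_two_pows [Fintype σ] {s t : σ} {k : ℕ} {α β : R} (hst : s ≠ t)
    (hcard : 2 < Fintype.card σ) (hk : k ≠ 0) (hα : α ≠ 0) (hβ : β ≠ 0) :
    Irreducible ((∏ i, X i) + (C α * X s ^ k + C β * X t ^ k) : MvPolynomial σ R) := by
  classical
  obtain ⟨j, hj⟩ : ∃ j, j ∉ ({s, t} : Finset σ) :=
    Finset.exists_mem_notMem_of_card_lt_card (s := {s, t}) (t := Finset.univ)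
      ((Finset.card_le_two).trans_lt hcard) |>.imp fun _ h ↦ h.2
  rw [← Finset.prod_erase_mul _ _ (Finset.mem_univ j)]
  refine irreducible_prod_X_mul_X_add (Finset.notMem_erase j _) ?_ ?_
  · simp only [Finset.mem_insert, Finset.mem_singleton, not_or] at hj
    rw [notMem_vars_iff_mem_supported_compl]
    exact add_mem
      (mul_mem (Subalgebra.algebraMap_mem _ α) (pow_mem (X_mem_supported.2 (Ne.symm hj.1)) k))
      (mul_mem (Subalgebra.algebraMap_mem _ β) (pow_mem (X_mem_supported.2 (Ne.symm hj.2)) k))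
  · rintro i - ⟨Q, hQ⟩
    rcases eq_or_ne i s with rfl | his
    · simpa [hst, hk, hβ] using congrArg (eval (Pi.single t 1)) hQ
    · simpa [hst, his, hk, hα] using congrArg (eval (Pi.single s 1)) hQ

end MulXAdd

section DiagonalPolynomial

variable {σ R : Type*}

theorem isWeightedHomogeneous_C_mul_X_pow [CommSemiring R] (w : σ → ℕ) (c : R) (i : σ) (u : ℕ) :
    IsWeightedHomogeneous w (C c * X i ^ u) (u * w i) :=
  ((isWeightedHomogeneous_X R w i).pow u).C_mul c

variable [Fintype σ]

/-- The polynomial `∑ u ∈ {1, …, k}, ∑ i, b u i * X i ^ u`, a sum of one-variable polynomials of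
degree at most `k`; the constant term of `V_{k,r}` is kept apart. -/
noncomputable def diagonalPolynomial [CommSemiring R] (k : ℕ) (b : ℕ → σ → R) :
    MvPolynomial σ R :=
  ∑ u ∈ Finset.Icc 1 k, ∑ i, C (b u i) * X i ^ u

theorem diagonalPolynomial_mem_restrictSupport [CommSemiring R] {w : σ → ℕ} {k N : ℕ}
    (b : ℕ → σ → R) (hw : ∀ i, k * w i ≤ N) :
    diagonalPolynomial k b ∈ restrictSupport R {d | Finsupp.weight w d ≤ N} := by
  refine sum_mem fun u hu ↦ sum_mem fun i _ ↦ mem_restrictSupport_of_isWeightedHomogeneous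
    (isWeightedHomogeneous_C_mul_X_pow w (b u i) i u) ?_
  exact (Nat.mul_le_mul_right _ (Finset.mem_Icc.1 hu).2).trans (hw i)

theorem weightedHomogeneousComponent_diagonalPolynomial [CommSemiring R] {w : σ → ℕ} {k N : ℕ}
    (b : ℕ → σ → R) (hN : N ≠ 0) (hw : ∀ i, k * w i ≤ N) :
    weightedHomogeneousComponent w N (diagonalPolynomial k b) =
      ∑ i with k * w i = N, C (b k i) * X i ^ k := by
  have hcomp (u : ℕ) (i : σ) : weightedHomogeneousComponent w N (C (b u i) * X i ^ u) =
      if N = u * w i then C (b u i) * X i ^ u else 0 :=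
    weightedHomogeneousComponent_of_mem (isWeightedHomogeneous_C_mul_X_pow w (b u i) i u)
  have hlow {u : ℕ} (hu : u < k) (i : σ) : N ≠ u * w i := by
    rintro rfl
    have hwi : 0 < w i := Nat.pos_of_ne_zero (right_ne_zero_of_mul hN)
    exact (hw i).not_gt (Nat.mul_lt_mul_of_pos_right hu hwi)
  simp only [diagonalPolynomial, map_sum, hcomp]
  rw [Finset.sum_eq_single k, Finset.sum_filter]
  · simp only [eq_comm]
  · intro u hu huk
    exact Finset.sum_eq_zero fun i _ ↦ if_neg (hlow ((Finset.mem_Icc.1 hu).2.lt_of_ne huk) i)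
  · intro hk
    have hk0 : k = 0 := by simpa [Nat.lt_one_iff] using hk
    exact Finset.sum_eq_zero fun i _ ↦ if_neg (by simpa [hk0] using hN)

theorem weightedLeadingForm_prod_X_add_diagonalPolynomial_add_C [CommSemiring R] {w : σ → ℕ}
    {k N : ℕ} {b : ℕ → σ → R} {c : R} (hN : N ≠ 0) (hsum : ∑ i, w i = N)
    (hw : ∀ i, k * w i ≤ N) (hne : (∏ i, X i) + ∑ i with k * w i = N, C (b k i) * X i ^ k ≠ 0) :
    weightedLeadingForm w ((∏ i, X i) + diagonalPolynomial k b + C c) =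
      (∏ i, X i) + ∑ i with k * w i = N, C (b k i) * X i ^ k := by
  have hprod : IsWeightedHomogeneous w (∏ i, X i : MvPolynomial σ R) N :=
    hsum ▸ IsWeightedHomogeneous.prod Finset.univ _ w fun i _ ↦ isWeightedHomogeneous_X R w i
  have hconst : IsWeightedHomogeneous w (C c : MvPolynomial σ R) 0 := isWeightedHomogeneous_C w c
  have htop : weightedHomogeneousComponent w N ((∏ i, X i) + diagonalPolynomial k b + C c) =
      (∏ i, X i) + ∑ i with k * w i = N, C (b k i) * X i ^ k := by
    rw [map_add, map_add, weightedHomogeneousComponent_eq_self hprod,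
      weightedHomogeneousComponent_diagonalPolynomial b hN hw,
      hconst.weightedHomogeneousComponent_ne N hN, add_zero]
  rw [← htop] at hne ⊢
  refine weightedLeadingForm_eq_weightedHomogeneousComponent ?_ hne
  rw [weightedTotalDegree_le_iff_mem_restrictSupport]
  exact add_mem (add_mem (mem_restrictSupport_of_isWeightedHomogeneous hprod le_rfl)
    (diagonalPolynomial_mem_restrictSupport b hw))
    (mem_restrictSupport_of_isWeightedHomogeneous hconst N.zero_le)

theorem sum_ite_eq_or_eq [DecidableEq σ] {M : Type*} [AddCommMonoid M] {s t : σ} (hst : s ≠ t)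
    (x y : M) :
    ∑ i, (if i = s ∨ i = t then x else y) = 2 • x + (Fintype.card σ - 2) • y := by
  have hpair : (Finset.univ.filter fun i ↦ i = s ∨ i = t) = {s, t} := by
    ext i
    simp
  rw [Finset.sum_ite, Finset.sum_const, Finset.sum_const, Finset.filter_not, hpair,
    Finset.card_univ_sdiff, Finset.card_pair hst]

variable [CommRing R] [IsDomain R]

theorem irreducible_prod_X_add_sum_C_mul_X_add_C {b : σ → R} {s t : σ} (hst : s ≠ t)
    (hs : b s ≠ 0) (ht : b t ≠ 0) (hcard : 2 < Fintype.card σ) (c : R) :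
    Irreducible ((∏ i, X i) + (∑ i, C (b i) * X i) + C c : MvPolynomial σ R) := by
  classical
  let rest : MvPolynomial σ R := (∑ i ∈ Finset.univ.erase s, C (b i) * X i) + C c
  have rest_ne_zero : rest ≠ 0 := by
    intro h
    have hc : c = 0 := by simpa [rest] using congrArg (eval 0) h
    have := congrArg (eval (Pi.single t 1)) h
    simp [rest, hc, Pi.single_apply, hst.symm, ht] at this
  have notMem_vars_rest : s ∉ rest.vars := by
    rw [notMem_vars_iff_mem_supported_compl]
    exact add_mem (sum_mem fun i hi ↦ mul_mem (Subalgebra.algebraMap_mem _ (b i))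
      (X_mem_supported.2 (Finset.ne_of_mem_erase hi))) (Subalgebra.algebraMap_mem _ c)
  have totalDegree_rest_le : rest.totalDegree ≤ 1 := by
    rw [← mem_restrictTotalDegree]
    refine add_mem (sum_mem fun i _ ↦ ?_) ?_
    · rw [mem_restrictTotalDegree]
      exact ((isHomogeneous_X R i).C_mul (b i)).totalDegree_le
    · simp [mem_restrictTotalDegree]
  have card_erase : (Finset.univ.erase s).card = Fintype.card σ - 1 :=
    Finset.card_erase_of_mem (Finset.mem_univ s)
  convert! irreducible_prod_X_add_C_mul_X_add (Finset.notMem_erase s Finset.univ) hs rest_ne_zero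
    notMem_vars_rest (by omega) using 1
  rw [← Finset.prod_erase_mul _ _ (Finset.mem_univ s),
    ← Finset.sum_erase_add _ _ (Finset.mem_univ s)]
  ring

theorem irreducible_prod_X_add_diagonalPolynomial_add_C {b : ℕ → σ → R} {s t : σ} {k : ℕ}
    (hst : s ≠ t) (hs : b k s ≠ 0) (ht : b k t ≠ 0) (hk : 2 ≤ k) (hcard : k < Fintype.card σ)
    (c : R) : Irreducible ((∏ i, X i) + diagonalPolynomial k b + C c) := by
  classical
  let n := Fintype.card σ - 2
  let w (i : σ) : ℕ := if i = s ∨ i = t then n else k - 2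
  have hlt : k - 2 < n := by omega
  have sum_w : ∑ i, w i = k * n := by
    rw [sum_ite_eq_or_eq hst, smul_eq_mul, smul_eq_mul]
    change 2 * n + n * (k - 2) = k * n
    rw [mul_comm n, ← add_mul, Nat.add_sub_of_le hk]
  have w_le (i : σ) : w i ≤ n := by grind
  have w_eq_iff (i : σ) : w i = n ↔ i = s ∨ i = t := by grind
  have filter_eq_pair : (Finset.univ.filter fun i ↦ k * w i = k * n) = {s, t} := by
    ext i
    simp [w_eq_iff, show k ≠ 0 by omega]
  have top_irreducible := irreducible_prod_X_add_two_pows hst (hk.trans_lt hcard)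
    (show k ≠ 0 by omega) hs ht
  rw [← Finset.sum_pair (f := fun i ↦ C (b k i) * X i ^ k) hst,
    ← filter_eq_pair] at top_irreducible
  apply irreducible_of_irreducible_weightedLeadingForm (w := w)
  rwa [weightedLeadingForm_prod_X_add_diagonalPolynomial_add_C
    (mul_ne_zero (by omega) (by omega)) sum_w (fun i ↦ Nat.mul_le_mul_left k (w_le i))
    top_irreducible.ne_zero]

end DiagonalPolynomial

theorem stmt_8_general {σ R : Type*} [Fintype σ] [CommRing R] [IsDomain R] {b : ℕ → σ → R}
    {s t : σ} {k : ℕ} (hst : s ≠ t) (hs : b k s ≠ 0) (ht : b k t ≠ 0) (hk0 : 0 < k)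
    (hk : k < Fintype.card σ) (hcard : 3 ≤ Fintype.card σ) (c : R) :
    Irreducible
      (-(∏ i, X i) + (∑ u ∈ Finset.Icc 1 k, ∑ i, C (b u i) * X i ^ u) + C c :
        MvPolynomial σ R) := by
  suffices Irreducible ((∏ i, X i) + diagonalPolynomial k (-b) + C (-c)) by
    have := (Associated.refl _).neg_right.irreducible this
    simpa [diagonalPolynomial, add_comm] using this
  rcases Nat.lt_or_ge k 2 with hk2 | hk2
  · obtain rfl : k = 1 := by omega
    simpa [diagonalPolynomial] using irreducible_prod_X_add_sum_C_mul_X_add_C (b := -b 1) hst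
      (neg_ne_zero.2 hs) (neg_ne_zero.2 ht) hcard (-c)
  · exact irreducible_prod_X_add_diagonalPolynomial_add_C hst
      (neg_ne_zero.2 hs) (neg_ne_zero.2 ht) hk2 hk (-c)

/-- For `0 < k < r` and `r ≥ 3`, the polynomial
`V_{k,r} = -∏ X_i + ∑_{u=1}^k ∑_{i=1}^r a_u^{q^{i-1}} X_i^u + T(a_0)`
with coefficients `a_u ∈ F_{q^r}` and `a_k ≠ 0` is absolutely irreducible, i.e.
irreducible over an algebraic closure of `F_q`. -/
theorem stmt_8 (p m q k r : ℕ) (hp : p.Prime) (hm : 0 < m) (hq : q = p ^ m)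
    (hr : 3 ≤ r) (hk0 : 0 < k) (hkr : k < r)
    (K : Type) [Field K] [IsAlgClosed K] [CharP K p]
    (a : ℕ → K) (hmem : ∀ u ≤ k, a u ^ q ^ r = a u) (hak : a k ≠ 0) :
    Irreducible
      (-(∏ i : Fin r, X i) +
        (∑ u ∈ Finset.Icc 1 k, ∑ i : Fin r, C (a u ^ q ^ (i : ℕ)) * X i ^ u) +
        C (∑ i ∈ Finset.range r, a 0 ^ q ^ i) : MvPolynomial (Fin r) K) :=
  stmt_8_general (b := fun u (i : Fin r) ↦ a u ^ q ^ (i : ℕ)) (s := ⟨0, by omega⟩)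
    (t := ⟨1, by omega⟩) (by simp) (pow_ne_zero _ hak) (pow_ne_zero _ hak) hk0
    (by simpa) (by simpa) _
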